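/- Let R be a commutative ring, let r ≥ 1, and let e, h : ℤ → R be functions with e(x) = h(x) = 0 for all x < 0. Let a = (a₁ > ⋯ > a_r), a′ = (a′₁ > ⋯ > a′_r), b = (b₁ > ⋯ > b_r), b′ = (b′₁ > ⋯ > b′_r) be strictly decreasing sequences of nonnegative integers. Then Σ_{s, t : {1,…,r} → ℕ} ( ∏_{i=1}^r e(a_i − t_i) · h(a′_i − s_i) ) · det( h(b_j − s_i) )_{1≤i,j≤r} · det( e(b′_j − t_i) )_{1≤i,j≤r} = Σ_{s₁>⋯>s_r≥0, t₁>⋯>t_r≥0} det( e(a_j − t_i) )_{1≤i,j≤r} · det( h(b_j − s_i) )_{1≤i,j≤r} · det( h(a′_j − s_i) )_{1≤i,j≤r} · det( e(b′_j − t_i) )_{1≤i,j≤r}, where both sums have only finitely many nonzero terms (terms vanish unless t_i ≤ a_i and s_i ≤ a′_i for all i). -/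

import Mathlib

/-!
The summand on the left is a product of a function of `s` and a function of `t`, and so is the
summand on the right, so both sides factor.  Each factor is an instance of one Cauchy-Binet
identity, `cauchyBinet_finsum`: in `∑ₛ (∏ᵢ F i (s i)) · det (g j (s i))` the determinant vanishes
unless `s` is injective, every injective `s` is uniquely `u ∘ σ` with `u` strictly decreasing and
`σ` a permutation, and since the determinant is alternating the sum over `σ` turns the product
`∏ᵢ F i (u (σ i))` into `det (F j (u i))`.  The vanishing of `e` and `h` at negative integers makes
all supports finite.
-/

open scoped BigOperators

open Finset in
/-- Cauchy-Binet with the index functions confined to a box. The first determinant is produced by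
grouping the injective functions `s` into orbits of strictly decreasing ones. -/
lemma cauchyBinet_box {R : Type*} [CommRing R] {r : ℕ} (F g : Fin r → ℕ → R) (M : ℕ) :
    (∑ s ∈ Fintype.piFinset (fun _ : Fin r => range M),
      (∏ i, F i (s i)) * Matrix.det (Matrix.of fun i j : Fin r => g j (s i))) =
    ∑ s ∈ (Fintype.piFinset (fun _ : Fin r => range M)) with StrictAnti s,
      Matrix.det (Matrix.of fun i j : Fin r => F j (s i)) *
        Matrix.det (Matrix.of fun i j : Fin r => g j (s i)) := by
  classical
  have key : ∀ u : Fin r → ℕ,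
      Matrix.det (Matrix.of fun i j : Fin r => F j (u i)) *
        Matrix.det (Matrix.of fun i j : Fin r => g j (u i)) =
      ∑ σ : Equiv.Perm (Fin r), (∏ i, F i (u (σ i))) *
        Matrix.det (Matrix.of fun i j : Fin r => g j (u (σ i))) := by
    intro u
    rw [Matrix.det_apply, sum_mul]
    refine sum_congr rfl fun σ _ => ?_
    have h1 := Matrix.det_permute σ (Matrix.of fun i j : Fin r => g j (u i))
    have h2 : (Matrix.of fun i j : Fin r => g j (u (σ i))) =
      (Matrix.of fun i j : Fin r => g j (u i)).submatrix σ id := rfl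
    rw [h2, h1, Units.smul_def, zsmul_eq_mul]
    simp only [Matrix.of_apply]
    ring
  rw [sum_congr rfl fun u _ => key u, ← sum_product']
  rw [← sum_filter_of_ne (p := fun s : Fin r → ℕ => Function.Injective s)]
  · symm
    refine sum_nbij (fun p => p.1 ∘ p.2) ?_ ?_ ?_ fun _ _ => rfl
    · rintro ⟨u, σ⟩ hp
      simp only [mem_product, mem_filter, Fintype.mem_piFinset, mem_univ, and_true] at hp
      simp only [mem_filter, Fintype.mem_piFinset]
      exact ⟨fun i => hp.1 (σ i), hp.2.injective.comp σ.injective⟩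
    · rintro ⟨u, σ⟩ hp ⟨v, τ⟩ hq huv
      simp only [coe_product, coe_filter, Set.mem_prod, Set.mem_ofPred_eq] at hp hq
      have huv' : u ∘ σ = v ∘ τ := huv
      have huv2 : u = v := (hp.1.2.range_inj hq.1.2).1 <| by
        rw [← σ.surjective.range_comp u, huv', τ.surjective.range_comp v]
      subst huv2
      have : σ = τ := Equiv.ext fun i => hp.1.2.injective (congrFun huv' i)
      rw [this]
    · intro s hs
      simp only [coe_filter, Set.mem_ofPred_eq, Fintype.mem_piFinset] at hs
      -- Sorting `s` increasingly and then reversing gives the decreasing representative.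
      let σ : Equiv.Perm (Fin r) := Fin.revPerm.trans (Tuple.sort s)
      refine ⟨(s ∘ σ, σ.symm), ?_, ?_⟩
      · simp only [coe_product, coe_filter, Set.mem_prod, Set.mem_ofPred_eq, coe_univ,
          Set.mem_univ, and_true, Fintype.mem_piFinset]
        refine ⟨fun i => hs.1 _, ?_⟩
        have hm : StrictMono (s ∘ Tuple.sort s) :=
          (Tuple.monotone_sort s).strictMono_of_injective
            (hs.2.comp (Tuple.sort s).injective)
        intro i j hij
        exact hm (Fin.rev_lt_rev.2 hij)
      · funext i
        simp
  · intro s _ hne i j hij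
    by_contra hne'
    exact hne (by rw [Matrix.det_zero_of_row_eq hne' (by ext k; simp [hij]), mul_zero])

lemma support_subset_box {R : Type*} [CommRing R] {r : ℕ} (F : Fin r → ℕ → R) (M : ℕ)
    (hF : ∀ i n, M ≤ n → F i n = 0) (D : (Fin r → ℕ) → R) :
    (Function.support fun s : Fin r → ℕ => (∏ i, F i (s i)) * D s) ⊆
      ↑(Fintype.piFinset (fun _ : Fin r => Finset.range M)) := by
  intro s hs
  simp only [Finset.mem_coe, Fintype.mem_piFinset, Finset.mem_range]
  by_contra! hc
  obtain ⟨i, hi⟩ := hc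
  exact hs (by
    simp only
    rw [Finset.prod_eq_zero (Finset.mem_univ i) (hF i _ hi), zero_mul])

lemma det_support_subset_box {R : Type*} [CommRing R] {r : ℕ} (F : Fin r → ℕ → R) (M : ℕ)
    (hF : ∀ i n, M ≤ n → F i n = 0) (D : (Fin r → ℕ) → R) :
    (Function.support fun s : Fin r → ℕ =>
      Matrix.det (Matrix.of fun i j : Fin r => F j (s i)) * D s) ⊆
      ↑(Fintype.piFinset (fun _ : Fin r => Finset.range M)) := by
  intro s hs
  simp only [Finset.mem_coe, Fintype.mem_piFinset, Finset.mem_range]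
  by_contra! hc
  obtain ⟨i, hi⟩ := hc
  exact hs (by
    simp only
    rw [Matrix.det_eq_zero_of_row_eq_zero i fun j => hF j _ hi, zero_mul])

/-- Cauchy-Binet over all natural-number index functions, for `F` of bounded support. -/
lemma cauchyBinet_finsum {R : Type*} [CommRing R] {r : ℕ} (F g : Fin r → ℕ → R) (M : ℕ)
    (hF : ∀ i n, M ≤ n → F i n = 0) :
    (∑ᶠ s : Fin r → ℕ,
      (∏ i, F i (s i)) * Matrix.det (Matrix.of fun i j : Fin r => g j (s i))) =
    ∑ᶠ s ∈ {f : Fin r → ℕ | StrictAnti f},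
      Matrix.det (Matrix.of fun i j : Fin r => F j (s i)) *
        Matrix.det (Matrix.of fun i j : Fin r => g j (s i)) := by
  classical
  rw [finsum_eq_sum_of_support_subset _ (support_subset_box F M hF _), cauchyBinet_box]
  symm
  refine finsum_mem_eq_sum_of_inter_support_eq _ ?_
  ext s
  have := @det_support_subset_box R _ r F M hF
    (fun s => Matrix.det (Matrix.of fun i j : Fin r => g j (s i))) s
  simp only [Set.mem_inter_iff, Set.mem_ofPred_eq, Finset.coe_filter]
  constructor
  · rintro ⟨h1, h2⟩
    exact ⟨⟨this h2, h1⟩, h2⟩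
  · rintro ⟨⟨_, h1⟩, h2⟩
    exact ⟨h1, h2⟩

/-- A double `finsum` of a separated product factors, given finite supports. -/
lemma finsum_mem_mul_finsum_mem {R ι κ : Type*} [CommRing R] (S : Set ι) (T : Set κ)
    (f : ι → R) (g : κ → R) (hf : (Function.support f).Finite) (hg : (Function.support g).Finite) :
    ∑ᶠ s ∈ S, ∑ᶠ t ∈ T, f s * g t = (∑ᶠ s ∈ S, f s) * ∑ᶠ t ∈ T, g t := by
  refine ((AddMonoidHom.mulRight (∑ᶠ t ∈ T, g t)).map_finsum_mem'
    (hf.subset Set.inter_subset_right) |>.trans ?_).symm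
  refine finsum_mem_congr rfl fun s _ => ?_
  exact (AddMonoidHom.mulLeft (f s)).map_finsum_mem' (hg.subset Set.inter_subset_right)




/-- An exchange identity in an arbitrary commutative ring `R`: for functions
`e, h : ℤ → R` vanishing on negative integers and strictly decreasing sequences
`a, a′, b, b′` of nonnegative integers,
`Σ_{s,t : Fin r → ℕ} (∏ᵢ e(aᵢ−tᵢ) h(a′ᵢ−sᵢ)) det(h(b_j−s_i)) det(e(b′_j−t_i))
 = Σ_{s,t strictly decreasing} det(e(a_j−t_i)) det(h(b_j−s_i)) det(h(a′_j−s_i)) det(e(b′_j−t_i))`,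
both sums having only finitely many nonzero terms. -/
theorem exchange_identity (R : Type*) [CommRing R] (r : ℕ) (hr : 1 ≤ r)
    (e h : ℤ → R) (he : ∀ x : ℤ, x < 0 → e x = 0) (hh : ∀ x : ℤ, x < 0 → h x = 0)
    (a a' b b' : Fin r → ℕ)
    (ha : StrictAnti a) (ha' : StrictAnti a') (hb : StrictAnti b) (hb' : StrictAnti b') :
    (∑ᶠ (s : Fin r → ℕ) (t : Fin r → ℕ),
        (∏ i, e ((a i : ℤ) - t i) * h ((a' i : ℤ) - s i)) *
          Matrix.det (Matrix.of fun i j : Fin r => h ((b j : ℤ) - s i)) *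
          Matrix.det (Matrix.of fun i j : Fin r => e ((b' j : ℤ) - t i))) =
    ∑ᶠ s ∈ {f : Fin r → ℕ | StrictAnti f}, ∑ᶠ t ∈ {f : Fin r → ℕ | StrictAnti f},
      Matrix.det (Matrix.of fun i j : Fin r => e ((a j : ℤ) - t i)) *
        Matrix.det (Matrix.of fun i j : Fin r => h ((b j : ℤ) - s i)) *
        Matrix.det (Matrix.of fun i j : Fin r => h ((a' j : ℤ) - s i)) *
        Matrix.det (Matrix.of fun i j : Fin r => e ((b' j : ℤ) - t i)) := by
  -- The sum of the entries of `c` is a convenient common upper bound for them.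
  have bound : ∀ (c : Fin r → ℕ) (f : ℤ → R), (∀ x : ℤ, x < 0 → f x = 0) →
      ∀ i n, (∑ k, c k) + 1 ≤ n → f ((c i : ℤ) - (n : ℕ)) = 0 := by
    intro c f hf i n hn
    have := Finset.single_le_sum (f := c) (fun _ _ => Nat.zero_le _) (Finset.mem_univ i)
    exact hf _ (by omega)
  have hA := bound a e he
  have hA' := bound a' h hh
  have h1 := cauchyBinet_finsum (fun i n => h ((a' i : ℤ) - (n : ℕ)))
    (fun i n => h ((b i : ℤ) - (n : ℕ))) _ hA'
  have h2 := cauchyBinet_finsum (fun i n => e ((a i : ℤ) - (n : ℕ)))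
    (fun i n => e ((b' i : ℤ) - (n : ℕ))) _ hA
  have L := finsum_mem_mul_finsum_mem Set.univ Set.univ _ _
    ((Finset.finite_toSet _).subset
      (support_subset_box (fun i n => h ((a' i : ℤ) - (n : ℕ))) _ hA'
        fun s => Matrix.det (Matrix.of fun i j : Fin r => h ((b j : ℤ) - s i))))
    ((Finset.finite_toSet _).subset
      (support_subset_box (fun i n => e ((a i : ℤ) - (n : ℕ))) _ hA
        fun t => Matrix.det (Matrix.of fun i j : Fin r => e ((b' j : ℤ) - t i))))
  have U := finsum_mem_mul_finsum_mem {f : Fin r → ℕ | StrictAnti f} {f : Fin r → ℕ | StrictAnti f}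
    _ _
    ((Finset.finite_toSet _).subset
      (det_support_subset_box (fun i n => h ((a' i : ℤ) - (n : ℕ))) _ hA'
        fun s => Matrix.det (Matrix.of fun i j : Fin r => h ((b j : ℤ) - s i))))
    ((Finset.finite_toSet _).subset
      (det_support_subset_box (fun i n => e ((a i : ℤ) - (n : ℕ))) _ hA
        fun t => Matrix.det (Matrix.of fun i j : Fin r => e ((b' j : ℤ) - t i))))
  simp only [finsum_mem_univ] at L
  rw [h1, h2, ← U] at L
  refine Eq.trans ?_ (L.trans ?_)
  · refine finsum_congr fun s => finsum_congr fun t => ?_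
    rw [Finset.prod_mul_distrib]
    ring
  · refine finsum_mem_congr rfl fun s _ => finsum_mem_congr rfl fun t _ => ?_
    ring
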